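/- Let Ω ⊆ ℝ³ be a bounded open set, x ∈ Ω, and σ : [0,1] → closure(Ω) a needle with tip at x. Fix j ∈ {1,2,3}, set Φ(z) = ∂G/∂z_j (z − x), and let (v_n) be functions harmonic on Ω with ∫_K (v_n − Φ)² dz → 0 for every compact K ⊆ Ω ∖ σ([0,1]). Then the part of the needle inside Ω is recovered from the blow-up set of the sequence: σ((0,1]) = {z ∈ Ω : for every open ball B centered at z, ∫_{B ∩ Ω} v_n² dz → +∞ as n → ∞}. (The needle-recovery formula stated after Proposition 3.1.) -/

import Mathlib

open MeasureTheory Filter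
open scoped ENNReal Topology

noncomputable section

/-- A curve `σ : ℝ → ℝ³` is piecewise linear (on `[0,1]`): there is a partition
`0 = t₀ < t₁ < ⋯ < t_m = 1` such that `σ` is affine on each subinterval. -/
def PiecewiseLinear (σ : ℝ → EuclideanSpace ℝ (Fin 3)) : Prop :=
  ∃ (m : ℕ) (t : Fin (m + 1) → ℝ), StrictMono t ∧ t 0 = 0 ∧ t (Fin.last m) = 1 ∧
    ∀ i : Fin m, ∀ u ∈ Set.Icc (t i.castSucc) (t i.succ),
      σ u = σ (t i.castSucc) +
        ((u - t i.castSucc) / (t i.succ - t i.castSucc)) •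
          (σ (t i.succ) - σ (t i.castSucc))

/-- A needle with tip at `x ∈ Ω`: a piecewise linear injective curve
`σ : [0,1] → closure Ω` with `σ(0) ∈ ∂Ω`, `σ(1) = x` and `σ(t) ∈ Ω` for `0 < t < 1`. -/
def IsNeedle (Ω : Set (EuclideanSpace ℝ (Fin 3))) (x : EuclideanSpace ℝ (Fin 3))
    (σ : ℝ → EuclideanSpace ℝ (Fin 3)) : Prop :=
  PiecewiseLinear σ ∧ Set.InjOn σ (Set.Icc 0 1) ∧
    (∀ t ∈ Set.Icc (0 : ℝ) 1, σ t ∈ closure Ω) ∧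
    σ 0 ∈ frontier Ω ∧ σ 1 = x ∧ ∀ t ∈ Set.Ioo (0 : ℝ) 1, σ t ∈ Ω

/-- A function is harmonic on an open set `Ω ⊆ ℝ³` if it is twice continuously
differentiable there and its Laplacian vanishes on `Ω`. -/
def HarmonicOnSet (v : EuclideanSpace ℝ (Fin 3) → ℝ)
    (Ω : Set (EuclideanSpace ℝ (Fin 3))) : Prop :=
  ContDiffOn ℝ 2 v Ω ∧ ∀ z ∈ Ω,
    (∑ i : Fin 3,
      fderiv ℝ (fun w => fderiv ℝ v w (EuclideanSpace.single i 1)) z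
        (EuclideanSpace.single i 1)) = 0

/-!
The energies `∫ (v n) ^ 2` stay bounded near points off the needle, by convergence there. Near the
tip they blow up, because the dipole `Φ` is not square integrable there and the needle is a null
set. To carry the blow-up down the needle to `σ t`, enclose the part of the needle between `σ t` and
the tip in a thin collar that meets the rest of the needle only close to `σ t`. As `(v n) ^ 2` is
subharmonic, its integral over the enclosed region is at most a constant times its integral over the
collar, so the latter blows up. Away from `σ t` the collar avoids the needle and the energy is
bounded, so the blow-up takes place near `σ t`.
-/

section Laplacian

open Module InnerProductSpace Laplacian

variable {E : Type*} [NormedAddCommGroup E] [InnerProductSpace ℝ E] [FiniteDimensional ℝ E]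

lemma laplacian_eq_sum_fderiv_fderiv {ι : Type*} [Fintype ι] (b : OrthonormalBasis ι ℝ E)
    {f : E → ℝ} {x : E} (hf : ContDiffAt ℝ 2 f x) :
    Δ f x = ∑ i, fderiv ℝ (fun y => fderiv ℝ f y (b i)) x (b i) := by
  have hf' : DifferentiableAt ℝ (fderiv ℝ f) x :=
    (hf.fderiv_right (m := 1) le_rfl).differentiableAt one_ne_zero
  rw [laplacian_eq_iteratedFDeriv_orthonormalBasis f b]
  refine Finset.sum_congr rfl fun i _ => ?_
  rw [iteratedFDeriv_two_apply, fderiv_clm_apply hf' (differentiableAt_const _)]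
  simp

lemma continuous_laplacian {f : E → ℝ} (hf : ContDiff ℝ 2 f) : Continuous (Δ f) := by
  rw [laplacian_eq_iteratedFDeriv_stdOrthonormalBasis]
  exact continuous_finsetSum _ fun i _ =>
    (ContinuousMultilinearMap.apply ℝ (fun _ : Fin 2 => E) ℝ _).continuous.comp
      (hf.continuous_iteratedFDeriv le_rfl)

lemma laplacian_norm_sq_sub_const (D : ℝ) (x : E) :
    Δ (fun y : E => ‖y‖ ^ 2 - D) x = 2 * finrank ℝ E := by
  have hderiv (e : E) : (fun y => fderiv ℝ (fun y : E => ‖y‖ ^ 2 - D) y e) =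
      fun y => 2 * innerSL ℝ e y := by
    ext y
    rw [((hasStrictFDerivAt_norm_sq y).hasFDerivAt.sub_const D).fderiv]
    simp [real_inner_comm]
  rw [laplacian_eq_sum_fderiv_fderiv (stdOrthonormalBasis ℝ E)
    ((contDiff_norm_sq ℝ).sub contDiff_const).contDiffAt]
  simp_rw [hderiv, ((innerSL ℝ _).hasFDerivAt.const_mul 2).fderiv]
  simp [mul_comm]

lemma laplacian_sq {ι : Type*} [Fintype ι] (b : OrthonormalBasis ι ℝ E) {f : E → ℝ} {x : E}
    (hf : ContDiffAt ℝ 2 f x) :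
    Δ (fun y => f y ^ 2) x = 2 * ∑ i, fderiv ℝ f x (b i) ^ 2 + 2 * f x * Δ f x := by
  have hdiff : DifferentiableAt ℝ f x := hf.differentiableAt two_ne_zero
  have hdiff' (e : E) : DifferentiableAt ℝ (fun y => fderiv ℝ f y e) x :=
    ((hf.fderiv_right (m := 1) le_rfl).differentiableAt one_ne_zero).clm_apply
      (differentiableAt_const e)
  have hderiv (e : E) : (fun y => fderiv ℝ (fun y => f y ^ 2) y e) =ᶠ[𝓝 x]
      fun y => 2 * (f y * fderiv ℝ f y e) := by
    filter_upwards [hf.eventually (by simp)] with y hy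
    rw [((hy.differentiableAt two_ne_zero).hasFDerivAt.pow 2).fderiv]
    simp [mul_assoc]
  rw [laplacian_eq_sum_fderiv_fderiv b (hf.pow 2), laplacian_eq_sum_fderiv_fderiv b hf,
    Finset.mul_sum, Finset.mul_sum, ← Finset.sum_add_distrib]
  refine Finset.sum_congr rfl fun i _ => ?_
  rw [(hderiv (b i)).fderiv_eq, fderiv_const_mul (hdiff.fun_mul (hdiff' (b i))),
    fderiv_fun_mul hdiff (hdiff' (b i))]
  simp only [smul_apply, add_apply, smul_eq_mul]
  ring

lemma laplacian_sq_nonneg {f : E → ℝ} {x : E} (hf : HarmonicAt f x) :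
    0 ≤ Δ (fun y => f y ^ 2) x := by
  rw [laplacian_sq (stdOrthonormalBasis ℝ E) hf.1, hf.2.self_of_nhds]
  simp only [Pi.zero_apply, mul_zero, add_zero]
  positivity

end Laplacian

section Green

open Module InnerProductSpace Laplacian

lemma integrable_mul_of_tsupport_subset {X : Type*} [TopologicalSpace X] [MeasurableSpace X]
    [OpensMeasurableSpace X] {μ : Measure X} [IsFiniteMeasureOnCompacts μ] {Ω : Set X}
    (hΩ : IsOpen Ω) {f g : X → ℝ} (hf : ContinuousOn f Ω) (hg : Continuous g)
    (hgc : HasCompactSupport g) (hgΩ : tsupport g ⊆ Ω) : Integrable (fun x => f x * g x) μ := by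
  have hcont : Continuous fun x => f x * g x := continuous_of_tsupport fun x hx =>
    (hf.continuousAt (hΩ.mem_nhds (hgΩ (tsupport_mul_subset_right hx)))).mul hg.continuousAt
  exact hcont.integrable_of_hasCompactSupport hgc.mul_left

lemma contDiffOn_fderiv_apply {E : Type*} [NormedAddCommGroup E] [NormedSpace ℝ E] {Ω : Set E}
    (hΩ : IsOpen Ω) {f : E → ℝ} {n m : WithTop ℕ∞} (hf : ContDiffOn ℝ n f Ω) (hmn : m + 1 ≤ n)
    (e : E) : ContDiffOn ℝ m (fun x => fderiv ℝ f x e) Ω :=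
  (hf.fderiv_of_isOpen hΩ hmn).clm_apply contDiffOn_const

variable {E : Type*} [NormedAddCommGroup E] [MeasurableSpace E] [BorelSpace E] {μ : Measure E}

lemma integral_mul_fderiv_eq_neg_of_tsupport_subset [NormedSpace ℝ E] [FiniteDimensional ℝ E]
    [μ.IsAddHaarMeasure] {Ω : Set E} (hΩ : IsOpen Ω) {f g : E → ℝ} (hf : ContDiffOn ℝ 1 f Ω)
    (hg : ContDiff ℝ 1 g) (hgc : HasCompactSupport g) (hgΩ : tsupport g ⊆ Ω) (e : E) :
    ∫ x, f x * fderiv ℝ g x e ∂μ = -∫ x, fderiv ℝ f x e * g x ∂μ :=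
  integral_mul_fderiv_eq_neg_fderiv_mul_of_integrable
    (integrable_mul_of_tsupport_subset hΩ
      (contDiffOn_fderiv_apply (m := 0) hΩ hf (by simp) e).continuousOn hg.continuous hgc hgΩ)
    (integrable_mul_of_tsupport_subset hΩ hf.continuousOn
      ((hg.continuous_fderiv one_ne_zero).clm_apply continuous_const) (hgc.fderiv_apply ℝ e)
      ((tsupport_fderiv_apply_subset ℝ e).trans hgΩ))
    (integrable_mul_of_tsupport_subset hΩ hf.continuousOn hg.continuous hgc hgΩ)
    (fun x hx => (hf.differentiableOn one_ne_zero).differentiableAt (hΩ.mem_nhds (hgΩ hx)))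
    (fun x _ => hg.differentiable one_ne_zero x)

lemma integral_mul_fderiv_fderiv_of_tsupport_subset [NormedSpace ℝ E] [FiniteDimensional ℝ E]
    [μ.IsAddHaarMeasure] {Ω : Set E} (hΩ : IsOpen Ω) {f g : E → ℝ} (hf : ContDiffOn ℝ 2 f Ω)
    (hg : ContDiff ℝ 2 g) (hgc : HasCompactSupport g) (hgΩ : tsupport g ⊆ Ω) (e : E) :
    ∫ x, f x * fderiv ℝ (fun y => fderiv ℝ g y e) x e ∂μ =
      ∫ x, fderiv ℝ (fun y => fderiv ℝ f y e) x e * g x ∂μ := by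
  have hg' : ContDiff ℝ 1 fun y => fderiv ℝ g y e :=
    (hg.fderiv_right le_rfl).clm_apply contDiff_const
  rw [integral_mul_fderiv_eq_neg_of_tsupport_subset hΩ (hf.of_le one_le_two) hg'
      (hgc.fderiv_apply ℝ e) ((tsupport_fderiv_apply_subset ℝ e).trans hgΩ),
    integral_mul_fderiv_eq_neg_of_tsupport_subset hΩ (contDiffOn_fderiv_apply hΩ hf le_rfl e)
      (hg.of_le one_le_two) hgc hgΩ, neg_neg]

lemma integral_mul_laplacian_of_tsupport_subset [InnerProductSpace ℝ E] [FiniteDimensional ℝ E]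
    [μ.IsAddHaarMeasure] {Ω : Set E} (hΩ : IsOpen Ω) {f g : E → ℝ} (hf : ContDiffOn ℝ 2 f Ω)
    (hg : ContDiff ℝ 2 g) (hgc : HasCompactSupport g) (hgΩ : tsupport g ⊆ Ω) :
    ∫ x, f x * Δ g x ∂μ = ∫ x, Δ f x * g x ∂μ := by
  let b := stdOrthonormalBasis ℝ E
  have hΔf (x : E) : Δ f x * g x =
      ∑ i, fderiv ℝ (fun y => fderiv ℝ f y (b i)) x (b i) * g x := by
    by_cases hx : x ∈ Ω
    · rw [laplacian_eq_sum_fderiv_fderiv b (hf.contDiffAt (hΩ.mem_nhds hx)), Finset.sum_mul]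
    · simp [image_eq_zero_of_notMem_tsupport fun h => hx (hgΩ h)]
  have hgg (i) : ContDiff ℝ 1 fun y => fderiv ℝ g y (b i) :=
    (hg.fderiv_right le_rfl).clm_apply contDiff_const
  simp_rw [hΔf, laplacian_eq_sum_fderiv_fderiv b hg.contDiffAt, Finset.mul_sum]
  rw [integral_finsetSum _ fun i _ => ?_, integral_finsetSum _ fun i _ => ?_]
  · exact Finset.sum_congr rfl fun i _ =>
      integral_mul_fderiv_fderiv_of_tsupport_subset hΩ hf hg hgc hgΩ (b i)
  · exact integrable_mul_of_tsupport_subset hΩ (contDiffOn_fderiv_apply (m := 0) hΩ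
      (contDiffOn_fderiv_apply (m := 1) hΩ hf le_rfl _) (by simp) _).continuousOn
      hg.continuous hgc hgΩ
  · exact integrable_mul_of_tsupport_subset hΩ hf.continuousOn
      (((hgg i).continuous_fderiv one_ne_zero).clm_apply continuous_const)
      ((hgc.fderiv_apply ℝ _).fderiv_apply ℝ _) ((tsupport_fderiv_apply_subset ℝ _).trans
        ((tsupport_fderiv_apply_subset ℝ _).trans hgΩ))

end Green

section Subharmonic

open Module InnerProductSpace Laplacian

variable {E : Type*} [NormedAddCommGroup E] [InnerProductSpace ℝ E] [FiniteDimensional ℝ E]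

lemma exists_nonpos_laplacian_eq {K L : Set E} (hK : IsCompact K) (hL : IsClosed L)
    (hLK : L ⊆ interior K) :
    ∃ η : E → ℝ, ContDiff ℝ 2 η ∧ tsupport η ⊆ K ∧ (∀ x, η x ≤ 0) ∧
      ∀ x ∈ L, Δ η x = 2 * finrank ℝ E := by
  obtain ⟨D, hD⟩ := hK.exists_bound_of_continuousOn
    (f := fun x : E => ‖x‖ ^ 2) (by fun_prop)
  obtain ⟨χ, hχL, hχK, hχ⟩ := exists_contMDiffMap_one_nhds_of_subset_interior (n := 2)
    (modelWithCornersSelf ℝ E) hL hLK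
  refine ⟨fun x => χ x * (‖x‖ ^ 2 - D),
    χ.contMDiff.contDiff.mul ((contDiff_norm_sq ℝ).sub contDiff_const), ?_, fun x => ?_,
    fun x hx => ?_⟩
  · exact closure_minimal (fun x hx => by_contra fun hxK => hx (by simp [hχK x hxK])) hK.isClosed
  · by_cases hx : x ∈ K
    · exact mul_nonpos_of_nonneg_of_nonpos (hχ x).1
        (sub_nonpos.2 ((le_abs_self _).trans (hD x hx)))
    · simp [hχK x hx]
  · have hη : (fun y => χ y * (‖y‖ ^ 2 - D)) =ᶠ[𝓝 x] fun y => ‖y‖ ^ 2 - D := by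
      filter_upwards [eventually_nhdsSet_iff_forall.1 hχL x hx] with y hy
      rw [hy, one_mul]
    rw [(laplacian_congr_nhds hη).self_of_nhds, laplacian_norm_sq_sub_const]

variable [MeasurableSpace E] [BorelSpace E] {μ : Measure E} [μ.IsAddHaarMeasure]

/- Test `Δ u ≥ 0` against a function `η ≤ 0` supported in `K` whose Laplacian is a positive
constant on `L`: Green's identity gives `∫ u Δη ≤ 0`, and `Δη` is bounded on the collar. -/
lemma exists_setIntegral_le_mul_setIntegral_sdiff [Nontrivial E] {Ω K L : Set E}
    (hΩ : IsOpen Ω) (hK : IsCompact K) (hKΩ : K ⊆ Ω) (hL : IsClosed L) (hLK : L ⊆ interior K) :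
    ∃ C > (0 : ℝ), ∀ u : E → ℝ, ContDiffOn ℝ 2 u Ω → (∀ x ∈ Ω, 0 ≤ u x) →
      (∀ x ∈ Ω, 0 ≤ Δ u x) → ∫ x in L, u x ∂μ ≤ C * ∫ x in K \ L, u x ∂μ := by
  obtain ⟨η, hη, hηK, hη_nonpos, hηL⟩ := exists_nonpos_laplacian_eq hK hL hLK
  obtain ⟨M, hM_pos, hM⟩ := (hK.image (continuous_laplacian hη)).isBounded.exists_pos_norm_le
  have hd : (0 : ℝ) < 2 * finrank ℝ E := by simp [finrank_pos]
  refine ⟨M / (2 * finrank ℝ E), by positivity, fun u hu hu_nonneg hΔu => ?_⟩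
  have hu_int : IntegrableOn u K μ := (hu.continuousOn.mono hKΩ).integrableOn_compact hK
  have huη_int : IntegrableOn (fun x => u x * Δ η x) K μ :=
    ((hu.continuousOn.mono hKΩ).mul (continuous_laplacian hη).continuousOn).integrableOn_compact hK
  have hgreen : ∫ x in K, u x * Δ η x ∂μ ≤ 0 := by
    rw [setIntegral_eq_integral_of_forall_compl_eq_zero fun x hx => ?_,
      integral_mul_laplacian_of_tsupport_subset hΩ hu hη
        (hK.of_isClosed_subset (isClosed_tsupport η) hηK) (hηK.trans hKΩ)]
    · refine integral_nonpos fun x => ?_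
      by_cases hx : x ∈ Ω
      · exact mul_nonpos_of_nonneg_of_nonpos (hΔu x hx) (hη_nonpos x)
      · simp [image_eq_zero_of_notMem_tsupport fun h => hx (hKΩ (hηK h))]
    · have hη0 : η =ᶠ[𝓝 x] fun _ => 0 :=
        notMem_tsupport_iff_eventuallyEq.1 fun h => hx (hηK h)
      simp [(laplacian_congr_nhds hη0).self_of_nhds]
  have hsplit : ∫ x in K, u x * Δ η x ∂μ =
      (∫ x in L, u x ∂μ) * (2 * finrank ℝ E) + ∫ x in K \ L, u x * Δ η x ∂μ := by
    rw [← integral_inter_add_sdiff hL.measurableSet huη_int,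
      Set.inter_eq_self_of_subset_right (hLK.trans interior_subset), ← integral_mul_const]
    congr 1
    exact setIntegral_congr_fun hL.measurableSet fun x hx => by simp only [hηL x hx]
  have hcollar : -(M * ∫ x in K \ L, u x ∂μ) ≤ ∫ x in K \ L, u x * Δ η x ∂μ := by
    rw [← neg_mul, ← integral_const_mul]
    refine setIntegral_mono_on ((hu_int.mono_set Set.sdiff_subset).const_mul _)
      (huη_int.mono_set Set.sdiff_subset) (hK.measurableSet.diff hL.measurableSet) fun x hx => ?_
    rw [mul_comm]
    exact mul_le_mul_of_nonneg_left
      (neg_le_of_abs_le (hM _ (Set.mem_image_of_mem _ hx.1))) (hu_nonneg x (hKΩ hx.1))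
  rw [div_mul_eq_mul_div, le_div_iff₀ hd]
  linarith

lemma exists_setIntegral_sq_le_mul_setIntegral_sq_sdiff [Nontrivial E] {Ω K L : Set E}
    (hΩ : IsOpen Ω) (hK : IsCompact K) (hKΩ : K ⊆ Ω) (hL : IsClosed L) (hLK : L ⊆ interior K) :
    ∃ C > (0 : ℝ), ∀ v : E → ℝ, HarmonicOnNhd v Ω →
      ∫ x in L, v x ^ 2 ∂μ ≤ C * ∫ x in K \ L, v x ^ 2 ∂μ := by
  obtain ⟨C, hC, hle⟩ := exists_setIntegral_le_mul_setIntegral_sdiff hΩ hK hKΩ hL hLK (μ := μ)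
  exact ⟨C, hC, fun v hv => hle (fun x => v x ^ 2) (hv.contDiffOn.pow 2)
    (fun _ _ => sq_nonneg _) fun x hx => laplacian_sq_nonneg (hv x hx)⟩

end Subharmonic

section NonIntegrable

open Module

lemma exists_isCompact_lt_setIntegral {X : Type*} [MetricSpace X] [ProperSpace X]
    [MeasurableSpace X] [OpensMeasurableSpace X] {μ : Measure X} [IsFiniteMeasureOnCompacts μ]
    {U : Set X} (hU : IsOpen U) {f : X → ℝ} (hf : ContinuousOn f U) (hf_nonneg : ∀ x, 0 ≤ f x)
    (hfU : ¬ IntegrableOn f U μ) (M : ℝ) :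
    ∃ K ⊆ U, IsCompact K ∧ M < ∫ x in K, f x ∂μ := by
  rcases isEmpty_or_nonempty X with hX | ⟨⟨x₀⟩⟩
  · simp [Set.eq_empty_of_isEmpty U] at hfU
  obtain ⟨F, hF_closed, hFU, hF_iUnion, hF_mono⟩ := hU.exists_iUnion_isClosed
  let K : ℕ → Set X := fun n => F n ∩ Metric.closedBall x₀ n
  have hK (n) : IsCompact (K n) := (isCompact_closedBall x₀ n).inter_left (hF_closed n)
  have hKU (n) : K n ⊆ U := Set.inter_subset_left.trans (hFU n)
  have hcover : AECover (μ.restrict U) atTop K := by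
    refine ⟨(ae_restrict_mem hU.measurableSet).mono fun x hx => ?_, fun n => (hK n).measurableSet⟩
    obtain ⟨m, hm⟩ := Set.mem_iUnion.1 (hF_iUnion ▸ hx)
    obtain ⟨k, hk⟩ := exists_nat_ge (dist x x₀)
    filter_upwards [eventually_ge_atTop m, eventually_ge_atTop k] with n hmn hkn
    exact ⟨hF_mono hmn hm, hk.trans (Nat.cast_le.2 hkn)⟩
  by_contra! hbound
  refine hfU (hcover.integrable_of_integral_bounded_of_nonneg_ae M (fun n => ?_)
    (ae_of_all _ hf_nonneg) (Eventually.of_forall fun n => ?_))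
  · exact ((hf.mono (hKU n)).integrableOn_compact (hK n)).mono_measure
      Measure.restrict_le_self
  · rw [Measure.restrict_restrict (hK n).measurableSet,
      Set.inter_eq_self_of_subset_left (hKU n)]
    exact hbound (K n) (hKU n) (hK n)

lemma integrableAtFilter_nhds_zero_of_comp_sub_right {G : Type*} [AddGroup G] [TopologicalSpace G]
    [ContinuousAdd G] [MeasurableSpace G] [BorelSpace G] {μ : Measure G} [μ.IsAddRightInvariant]
    {f : G → ℝ} {x : G} (hf : IntegrableAtFilter (fun y => f (y - x)) (𝓝 x) μ) :
    IntegrableAtFilter f (𝓝 0) μ := by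
  obtain ⟨s, hs, hint⟩ := hf
  refine ⟨(fun y => y + x) ⁻¹' s,
    (continuous_add_const x).continuousAt.preimage_mem_nhds (by simpa using hs), ?_⟩
  simpa [Function.comp_def] using
    ((measurePreserving_add_right μ x).integrableOn_comp_preimage
      (measurableEmbedding_addRight x)).2 hint

variable {E : Type*} [NormedAddCommGroup E] [NormedSpace ℝ E] [FiniteDimensional ℝ E]
  [MeasurableSpace E] [BorelSpace E] {μ : Measure E} [μ.IsAddHaarMeasure]

/- Halving the radius multiplies `∫ ‖f‖` over a ball by `2 ^ (k - d) > 1`, so a finite integral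
must vanish. -/
lemma ae_eq_zero_of_homogeneous_of_integrableOn_ball {f : E → ℝ} {k : ℕ} (hk : finrank ℝ E < k)
    (hf : ∀ c > (0 : ℝ), ∀ x, f (c • x) = (c ^ k)⁻¹ * f x) {r : ℝ}
    (hint : IntegrableOn f (Metric.ball 0 r) μ) :
    f =ᵐ[μ.restrict (Metric.ball 0 r)] 0 := by
  have hscale : 2 ^ k * ∫ x in Metric.ball 0 r, ‖f x‖ ∂μ =
      2 ^ finrank ℝ E * ∫ x in Metric.ball 0 (r / 2), ‖f x‖ ∂μ := by
    have h := Measure.setIntegral_comp_smul_of_pos μ (fun x => ‖f x‖) (Metric.ball 0 r)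
      (R := 1 / 2) (by norm_num)
    simp_rw [hf (1 / 2) (by norm_num), norm_mul, integral_const_mul] at h
    rw [smul_ball (by norm_num : (1 / 2 : ℝ) ≠ 0)] at h
    simpa [div_eq_inv_mul] using h
  have hmono : ∫ x in Metric.ball 0 (r / 2), ‖f x‖ ∂μ ≤ ∫ x in Metric.ball 0 r, ‖f x‖ ∂μ := by
    rcases le_total r 0 with hr | hr
    · simp [Metric.ball_eq_empty.2 hr, Metric.ball_eq_empty.2 (by linarith : r / 2 ≤ 0)]
    exact setIntegral_mono_set hint.norm (ae_of_all _ fun x => norm_nonneg (f x))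
      (Metric.ball_subset_ball (half_le_self hr)).eventuallyLE
  have hzero : ∫ x in Metric.ball 0 r, ‖f x‖ ∂μ = 0 := by
    have hpow : (2 : ℝ) ^ finrank ℝ E < 2 ^ k := pow_lt_pow_right₀ one_lt_two hk
    have hnonneg : 0 ≤ ∫ x in Metric.ball 0 r, ‖f x‖ ∂μ := integral_nonneg fun x => norm_nonneg _
    nlinarith [pow_pos (two_pos (α := ℝ)) (finrank ℝ E)]
  filter_upwards [(integral_eq_zero_iff_of_nonneg (fun x => norm_nonneg (f x)) hint.norm).1 hzero]
    with x hx using norm_eq_zero.1 hx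

lemma not_integrableAtFilter_nhds_zero_of_homogeneous {f : E → ℝ} {k : ℕ} (hk : finrank ℝ E < k)
    (hf : ∀ c > (0 : ℝ), ∀ x, f (c • x) = (c ^ k)⁻¹ * f x) {x₀ : E} (hcont : ContinuousAt f x₀)
    (hx₀ : f x₀ ≠ 0) : ¬ IntegrableAtFilter f (𝓝 0) μ := by
  intro hint
  obtain ⟨s, hs, hint⟩ := hint
  obtain ⟨r, hr, hrs⟩ := Metric.mem_nhds_iff.1 hs
  have hzero : ∀ᵐ y ∂μ, y ∈ Metric.ball 0 r → f y = 0 :=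
    (ae_restrict_iff' measurableSet_ball).1
      (ae_eq_zero_of_homogeneous_of_integrableOn_ball hk hf (hint.mono_set hrs))
  have hsmall : ∀ᶠ c : ℝ in 𝓝[>] 0, c • x₀ ∈ Metric.ball 0 r :=
    (tendsto_id.smul_const x₀).mono_left nhdsWithin_le_nhds
      (by simpa using Metric.ball_mem_nhds (0 : E) hr)
  obtain ⟨c, hcx₀, hc⟩ := (hsmall.and self_mem_nhdsWithin).exists
  have hc : 0 < c := hc
  have hne : ∀ᶠ y in 𝓝 (c • x₀), f (c⁻¹ • y) ≠ 0 := by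
    have hlim : Tendsto (fun y : E => c⁻¹ • y) (𝓝 (c • x₀)) (𝓝 x₀) :=
      (continuous_const_smul c⁻¹).tendsto' _ _ (inv_smul_smul₀ hc.ne' x₀)
    exact hlim.eventually (hcont.eventually_ne hx₀)
  obtain ⟨y, hy_zero, hy_ne, hy⟩ := (Measure.dense_of_ae hzero).inter_nhds_nonempty
    (hne.and (Metric.isOpen_ball.mem_nhds hcx₀))
  refine mul_ne_zero (inv_ne_zero (pow_pos hc k).ne') hy_ne ?_
  rw [← hf c hc, smul_inv_smul₀ hc.ne', hy_zero hy]

end NonIntegrable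

section BlowUp

/-- `L²_loc` convergence of `v n` to `Φ` on `U`, expressed by the integrals of `(v n - Φ) ^ 2` over
the compact subsets of `U`. These are Bochner integrals, hence meaningful only if `v n - Φ` is
square integrable on compact subsets, as it is for functions continuous on `U`. -/
def TendstoL2OnCompacts {X ι : Type*} [TopologicalSpace X] [MeasurableSpace X] (μ : Measure X)
    (l : Filter ι) (U : Set X) (v : ι → X → ℝ) (Φ : X → ℝ) : Prop :=
  ∀ K ⊆ U, IsCompact K → Tendsto (fun n => ∫ z in K, (v n z - Φ z) ^ 2 ∂μ) l (𝓝 0)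

/-- The blow-up set of a family of functions on `Ω`: the points of `Ω` near which the energy
`∫ (v n) ^ 2` tends to infinity along `l`. The energy is `ℝ≥0∞`-valued because `v n` need not be
square integrable on all of `Ω`. -/
def blowUpSet {X ι : Type*} [PseudoMetricSpace X] [MeasurableSpace X] (μ : Measure X)
    (l : Filter ι) (Ω : Set X) (v : ι → X → ℝ) : Set X :=
  {z | z ∈ Ω ∧ ∀ r > (0 : ℝ),
    Tendsto (fun n => ∫⁻ w in Metric.ball z r ∩ Ω, ENNReal.ofReal (v n w ^ 2) ∂μ) l (𝓝 ⊤)}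

lemma setIntegral_sq_le {X : Type*} [TopologicalSpace X] [T2Space X] [MeasurableSpace X]
    [OpensMeasurableSpace X] {μ : Measure X} [IsFiniteMeasureOnCompacts μ] {K : Set X}
    (hK : IsCompact K) {f g : X → ℝ} (hf : ContinuousOn f K) (hg : ContinuousOn g K) :
    ∫ x in K, f x ^ 2 ∂μ ≤ 2 * ∫ x in K, (f x - g x) ^ 2 ∂μ + 2 * ∫ x in K, g x ^ 2 ∂μ := by
  have hfg_int : IntegrableOn (fun x => (f x - g x) ^ 2) K μ :=
    ((hf.sub hg).pow 2).integrableOn_compact hK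
  have hg_int : IntegrableOn (fun x => g x ^ 2) K μ := (hg.pow 2).integrableOn_compact hK
  rw [← integral_const_mul, ← integral_const_mul,
    ← integral_add (hfg_int.const_mul 2) (hg_int.const_mul 2)]
  refine integral_mono_of_nonneg (ae_of_all _ fun x => sq_nonneg (f x))
    ((hfg_int.const_mul 2).add (hg_int.const_mul 2)) (ae_of_all _ fun x => ?_)
  change f x ^ 2 ≤ 2 * (f x - g x) ^ 2 + 2 * g x ^ 2
  nlinarith [sq_nonneg (f x - 2 * g x)]

lemma setLIntegral_ofReal_sq {X : Type*} [TopologicalSpace X] [T2Space X] [MeasurableSpace X]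
    [OpensMeasurableSpace X] {μ : Measure X} [IsFiniteMeasureOnCompacts μ] {K : Set X}
    (hK : IsCompact K) {f : X → ℝ} (hf : ContinuousOn f K) :
    ∫⁻ x in K, ENNReal.ofReal (f x ^ 2) ∂μ = ENNReal.ofReal (∫ x in K, f x ^ 2 ∂μ) :=
  (ofReal_integral_eq_lintegral_ofReal ((hf.pow 2).integrableOn_compact hK)
    (ae_of_all _ fun x => sq_nonneg (f x))).symm

namespace TendstoL2OnCompacts

variable {X ι : Type*} [TopologicalSpace X] [T2Space X] [MeasurableSpace X]
  [OpensMeasurableSpace X] {μ : Measure X} [IsFiniteMeasureOnCompacts μ] {l : Filter ι}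
  {U K : Set X} {v : ι → X → ℝ} {Φ : X → ℝ}

lemma eventually_setIntegral_sq_le (h : TendstoL2OnCompacts μ l U v Φ)
    (hv : ∀ n, ContinuousOn (v n) U) (hΦ : ContinuousOn Φ U) (hK : IsCompact K) (hKU : K ⊆ U) :
    ∀ᶠ n in l, ∫ z in K, v n z ^ 2 ∂μ ≤ 2 * ∫ z in K, Φ z ^ 2 ∂μ + 1 := by
  filter_upwards [(h K hKU hK).eventually_le_const (show (0 : ℝ) < 1 / 2 by norm_num)] with n hn
  linarith [setIntegral_sq_le hK ((hv n).mono hKU) (hΦ.mono hKU) (μ := μ)]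

lemma eventually_setIntegral_limit_sq_le (h : TendstoL2OnCompacts μ l U v Φ)
    (hv : ∀ n, ContinuousOn (v n) U) (hΦ : ContinuousOn Φ U) (hK : IsCompact K) (hKU : K ⊆ U) :
    ∀ᶠ n in l, ∫ z in K, Φ z ^ 2 ∂μ ≤ 2 * ∫ z in K, v n z ^ 2 ∂μ + 1 := by
  filter_upwards [(h K hKU hK).eventually_le_const (show (0 : ℝ) < 1 / 2 by norm_num)] with n hn
  have hle := setIntegral_sq_le hK (hΦ.mono hKU) ((hv n).mono hKU) (μ := μ)
  simp only [sub_sq_comm (Φ _)] at hle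
  linarith

end TendstoL2OnCompacts

lemma blowUpSet_subset {X ι : Type*} [MetricSpace X] [ProperSpace X] [MeasurableSpace X]
    [OpensMeasurableSpace X] {μ : Measure X} [IsFiniteMeasureOnCompacts μ] {l : Filter ι} [l.NeBot]
    {Ω N : Set X} (hΩ : IsOpen Ω) (hN : IsClosed N) {v : ι → X → ℝ} {Φ : X → ℝ}
    (hv : ∀ n, ContinuousOn (v n) (Ω \ N)) (hΦ : ContinuousOn Φ (Ω \ N))
    (hconv : TendstoL2OnCompacts μ l (Ω \ N) v Φ) : blowUpSet μ l Ω v ⊆ N := by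
  rintro z ⟨hzΩ, hz⟩
  by_contra hzN
  obtain ⟨r, hr, hball⟩ :=
    Metric.nhds_basis_closedBall.mem_iff.1 ((hΩ.sdiff hN).mem_nhds ⟨hzΩ, hzN⟩)
  have hK : IsCompact (Metric.closedBall z r) := isCompact_closedBall z r
  have hlarge := (hz r hr).eventually (lt_mem_nhds (ENNReal.ofReal_lt_top
    (r := 2 * ∫ w in Metric.closedBall z r, Φ w ^ 2 ∂μ + 1)))
  obtain ⟨n, hlt, hle⟩ :=
    (hlarge.and (hconv.eventually_setIntegral_sq_le hv hΦ hK hball)).exists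
  refine (hlt.trans_le (lintegral_mono_set
    (Set.inter_subset_left.trans Metric.ball_subset_closedBall))).not_ge ?_
  rw [setLIntegral_ofReal_sq hK ((hv n).mono hball)]
  exact ENNReal.ofReal_le_ofReal hle

lemma TendstoL2OnCompacts.tendsto_setIntegral_sq_atTop {X ι : Type*} [MetricSpace X]
    [ProperSpace X] [MeasurableSpace X] [OpensMeasurableSpace X] {μ : Measure X}
    [IsFiniteMeasureOnCompacts μ] {l : Filter ι} {Ω N L : Set X} (hN : IsClosed N) (hμN : μ N = 0)
    {v : ι → X → ℝ} {Φ : X → ℝ} (hv : ∀ n, ContinuousOn (v n) Ω) (hΦ : ContinuousOn Φ (Ω \ N))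
    (hconv : TendstoL2OnCompacts μ l (Ω \ N) v Φ) (hL : IsCompact L) (hLΩ : L ⊆ Ω) {x : X}
    (hxL : x ∈ interior L) (hx : ¬ IntegrableAtFilter (fun z => Φ z ^ 2) (𝓝 x) μ) :
    Tendsto (fun n => ∫ z in L, v n z ^ 2 ∂μ) l atTop := by
  have hU : interior L \ N ⊆ Ω \ N := Set.sdiff_subset_sdiff_left (interior_subset.trans hLΩ)
  have hΦ_int : ¬ IntegrableOn (fun z => Φ z ^ 2) (interior L \ N) μ := fun hint =>
    hx ⟨interior L, isOpen_interior.mem_nhds hxL,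
      hint.congr_set_ae (sdiff_null_ae_eq_self hμN).symm⟩
  refine tendsto_atTop.2 fun M => ?_
  obtain ⟨Q, hQU, hQ, hMQ⟩ := exists_isCompact_lt_setIntegral (isOpen_interior.sdiff hN)
    (f := fun z => Φ z ^ 2) ((hΦ.mono hU).pow 2) (fun z => sq_nonneg (Φ z)) hΦ_int (2 * M + 1)
  filter_upwards [hconv.eventually_setIntegral_limit_sq_le
    (fun n => (hv n).mono Set.sdiff_subset) hΦ hQ (hQU.trans hU)] with n hn
  have hQL : ∫ z in Q, v n z ^ 2 ∂μ ≤ ∫ z in L, v n z ^ 2 ∂μ :=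
    setIntegral_mono_set (((hv n).mono hLΩ |>.pow 2).integrableOn_compact hL)
      (ae_of_all _ fun z => sq_nonneg (v n z))
      (hQU.trans (Set.sdiff_subset.trans interior_subset)).eventuallyLE
  linarith

lemma TendstoL2OnCompacts.tendsto_setLIntegral_sq_top {X ι : Type*} [TopologicalSpace X] [T2Space X]
    [MeasurableSpace X] [OpensMeasurableSpace X] {μ : Measure X} [IsFiniteMeasureOnCompacts μ]
    {l : Filter ι} {Ω N T W : Set X} {v : ι → X → ℝ} {Φ : X → ℝ}
    (hv : ∀ n, ContinuousOn (v n) Ω) (hΦ : ContinuousOn Φ (Ω \ N))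
    (hconv : TendstoL2OnCompacts μ l (Ω \ N) v Φ) (hT : IsCompact T) (hTΩ : T ⊆ Ω)
    (hW : IsOpen W) (hTNW : T ∩ N ⊆ W)
    (htop : Tendsto (fun n => ∫ z in T, v n z ^ 2 ∂μ) l atTop) :
    Tendsto (fun n => ∫⁻ z in W ∩ Ω, ENNReal.ofReal (v n z ^ 2) ∂μ) l (𝓝 ⊤) := by
  have hTW : T \ W ⊆ Ω \ N := fun z hz => ⟨hTΩ hz.1, fun hzN => hz.2 (hTNW ⟨hz.1, hzN⟩)⟩
  let a : ℝ≥0∞ := ENNReal.ofReal (2 * ∫ z in T \ W, Φ z ^ 2 ∂μ + 1)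
  have hsub : Tendsto (fun n => ENNReal.ofReal (∫ z in T, v n z ^ 2 ∂μ) - a) l (𝓝 ⊤) := by
    simpa [a] using ENNReal.Tendsto.sub (ENNReal.tendsto_ofReal_atTop.comp htop)
      tendsto_const_nhds (.inr ENNReal.ofReal_ne_top) (b := a)
  refine tendsto_nhds_top_mono hsub ?_
  filter_upwards [hconv.eventually_setIntegral_sq_le (fun n => (hv n).mono Set.sdiff_subset) hΦ
    (hT.diff hW) hTW] with n hn
  rw [tsub_le_iff_right, ← setLIntegral_ofReal_sq hT ((hv n).mono hTΩ),
    ← lintegral_inter_add_sdiff _ T hW.measurableSet]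
  refine add_le_add (lintegral_mono_set fun z hz => ⟨hz.2, hTΩ hz.1⟩) ?_
  rw [setLIntegral_ofReal_sq (hT.diff hW) ((hv n).mono (Set.sdiff_subset.trans hTΩ))]
  exact ENNReal.ofReal_le_ofReal hn

open InnerProductSpace in
lemma tendsto_setIntegral_sdiff_interior_sq_atTop {E ι : Type*} [NormedAddCommGroup E]
    [InnerProductSpace ℝ E] [FiniteDimensional ℝ E] [Nontrivial E] [MeasurableSpace E]
    [BorelSpace E] {μ : Measure E} [μ.IsAddHaarMeasure] {l : Filter ι} {Ω K L : Set E}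
    (hΩ : IsOpen Ω) (hK : IsCompact K) (hKΩ : K ⊆ Ω) (hL : IsClosed L) (hLK : L ⊆ interior K)
    {v : ι → E → ℝ} (hv : ∀ n, HarmonicOnNhd (v n) Ω)
    (htop : Tendsto (fun n => ∫ z in L, v n z ^ 2 ∂μ) l atTop) :
    Tendsto (fun n => ∫ z in K \ interior L, v n z ^ 2 ∂μ) l atTop := by
  obtain ⟨C, hC, hle⟩ := exists_setIntegral_sq_le_mul_setIntegral_sq_sdiff hΩ hK hKΩ hL hLK (μ := μ)
  refine (tendsto_atTop_mono (fun n => (hle (v n) (hv n)).trans ?_) htop).atTop_of_const_mul₀ hC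
  exact mul_le_mul_of_nonneg_left (setIntegral_mono_set
    ((((hv n).contDiffOn.continuousOn.mono hKΩ).pow 2).integrableOn_compact hK |>.mono_set
      Set.sdiff_subset)
    (ae_of_all _ fun z => sq_nonneg (v n z))
    (Set.sdiff_subset_sdiff_right interior_subset).eventuallyLE) hC.le

end BlowUp

section Needle

/- The needle beyond `σ t` is enclosed by a thin collar `K \ interior L`, which stays away from
`σ 0` and meets the curve only close to `σ t`. -/
lemma exists_isCompact_collar {X : Type*} [TopologicalSpace X] [T2Space X] [LocallyCompactSpace X]
    {Ω W : Set X} (hΩ : IsOpen Ω) {σ : ℝ → X} {a b t : ℝ} (hσ : ContinuousOn σ (Set.Icc a b))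
    (hinj : Set.InjOn σ (Set.Icc a b)) (hσΩ : Set.MapsTo σ (Set.Ioc a b) Ω)
    (ht : t ∈ Set.Ioc a b) (hW : W ∈ 𝓝 (σ t)) :
    ∃ K L : Set X, IsCompact K ∧ K ⊆ Ω ∧ IsCompact L ∧ L ⊆ interior K ∧
      σ '' Set.Icc t b ⊆ interior L ∧ (K \ interior L) ∩ σ '' Set.Icc a b ⊆ W := by
  have hleft : ∀ᶠ s in 𝓝[<] t, σ s ∈ W :=
    ((hσ t ⟨ht.1.le, ht.2⟩).tendsto.mono_left (nhdsWithin_le_of_mem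
      (Icc_mem_nhdsLT_of_mem ht))).eventually hW
  obtain ⟨t', ⟨-, ht't⟩, ht'W⟩ := (mem_nhdsLT_iff_exists_mem_Ico_Ioo_subset ht.1).1 hleft
  have hP : IsCompact (σ '' Set.Icc t b) :=
    isCompact_Icc.image_of_continuousOn (hσ.mono (Set.Icc_subset_Icc_left ht.1.le))
  have hQ : IsCompact (σ '' Set.Icc a t') :=
    isCompact_Icc.image_of_continuousOn (hσ.mono (Set.Icc_subset_Icc_right (ht't.le.trans ht.2)))
  have hPQ : σ '' Set.Icc t b ⊆ Ω \ σ '' Set.Icc a t' := by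
    rintro _ ⟨s, hs, rfl⟩
    refine ⟨hσΩ ⟨ht.1.trans_le hs.1, hs.2⟩, ?_⟩
    rintro ⟨u, hu, hus⟩
    have hus_eq : u = s := hinj ⟨hu.1, hu.2.trans (ht't.le.trans ht.2)⟩
      ⟨ht.1.le.trans hs.1, hs.2⟩ hus
    linarith [hu.2, hs.1]
  obtain ⟨K, hK, hPK, hKQ⟩ := exists_compact_between hP (hΩ.sdiff hQ.isClosed) hPQ
  obtain ⟨L, hL, hPL, hLK⟩ := exists_compact_between hP isOpen_interior hPK
  refine ⟨K, L, hK, hKQ.trans Set.sdiff_subset, hL, hLK, hPL, ?_⟩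
  rintro _ ⟨⟨hsK, hsL⟩, s, hs, rfl⟩
  have ht's : t' < s := not_le.1 fun h => (hKQ hsK).2 (Set.mem_image_of_mem σ ⟨hs.1, h⟩)
  have hst : s < t := not_le.1 fun h => hsL (hPL (Set.mem_image_of_mem σ ⟨h, hs.2⟩))
  exact ht'W ⟨ht's, hst⟩

open InnerProductSpace in
theorem needle_recovery_general {E ι : Type*} [NormedAddCommGroup E] [InnerProductSpace ℝ E]
    [FiniteDimensional ℝ E] [MeasurableSpace E] [BorelSpace E] {μ : Measure E}
    [μ.IsAddHaarMeasure] {l : Filter ι} [l.NeBot] {Ω : Set E} (hΩ : IsOpen Ω) {σ : ℝ → E}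
    (hσ : ContinuousOn σ (Set.Icc 0 1)) (hinj : Set.InjOn σ (Set.Icc 0 1))
    (hnull : μ (σ '' Set.Icc 0 1) = 0) (hσ0 : σ 0 ∉ Ω) (hσΩ : Set.MapsTo σ (Set.Ioc 0 1) Ω)
    {Φ : E → ℝ} (hΦ : ContinuousOn Φ (Ω \ σ '' Set.Icc 0 1))
    (hsing : ¬ IntegrableAtFilter (fun z => Φ z ^ 2) (𝓝 (σ 1)) μ) {v : ι → E → ℝ}
    (hv : ∀ n, HarmonicOnNhd (v n) Ω)
    (hconv : TendstoL2OnCompacts μ l (Ω \ σ '' Set.Icc 0 1) v Φ) :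
    σ '' Set.Ioc 0 1 = blowUpSet μ l Ω v := by
  have hN : IsClosed (σ '' Set.Icc 0 1) := (isCompact_Icc.image_of_continuousOn hσ).isClosed
  have hv_cont (n) : ContinuousOn (v n) Ω := (hv n).contDiffOn.continuousOn
  have : Nontrivial E := ⟨σ 0, σ 1, fun h => hσ0 (h ▸ hσΩ (Set.right_mem_Ioc.2 one_pos))⟩
  refine Set.Subset.antisymm ?_ fun z hz => ?_
  · rintro _ ⟨t, ht, rfl⟩
    refine ⟨hσΩ ht, fun r hr => ?_⟩
    obtain ⟨K, L, hK, hKΩ, hL, hLK, hσL, hcollar⟩ :=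
      exists_isCompact_collar hΩ hσ hinj hσΩ ht (Metric.ball_mem_nhds (σ t) hr)
    have htip : Tendsto (fun n => ∫ z in L, v n z ^ 2 ∂μ) l atTop :=
      hconv.tendsto_setIntegral_sq_atTop hN hnull hv_cont hΦ hL
        (hLK.trans (interior_subset.trans hKΩ))
        (hσL (Set.mem_image_of_mem σ (Set.right_mem_Icc.2 ht.2))) hsing
    exact hconv.tendsto_setLIntegral_sq_top hv_cont hΦ (hK.diff isOpen_interior)
      (Set.sdiff_subset.trans hKΩ) Metric.isOpen_ball hcollar
      (tendsto_setIntegral_sdiff_interior_sq_atTop hΩ hK hKΩ hL.isClosed hLK hv htip)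
  · obtain ⟨t, ht, rfl⟩ := blowUpSet_subset hΩ hN (fun n => (hv_cont n).mono Set.sdiff_subset)
      hΦ hconv hz
    exact ⟨t, ⟨ht.1.lt_of_ne fun h => hσ0 (h ▸ hz.1), ht.2⟩, rfl⟩

end Needle

section PiecewiseLinear

open Module

lemma addHaar_affineSpan_pair {E : Type*} [NormedAddCommGroup E] [NormedSpace ℝ E]
    [FiniteDimensional ℝ E] [MeasurableSpace E] [BorelSpace E] (μ : Measure E)
    [μ.IsAddHaarMeasure] (hE : 1 < finrank ℝ E) (a b : E) :
    μ (affineSpan ℝ {a, b} : Set E) = 0 := by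
  refine Measure.addHaar_affineSubspace μ _ fun htop => hE.not_ge ?_
  have hdim := collinear_iff_finrank_le_one.1 (collinear_pair ℝ a b)
  rwa [AffineSubspace.vectorSpan_eq_top_of_affineSpan_eq_top ℝ E E htop, finrank_top] at hdim

lemma exists_mem_Icc_castSucc_succ {α : Type*} [LinearOrder α] {m : ℕ} {t : Fin (m + 1) → α}
    (ht : t 0 ≠ t (Fin.last m)) {u : α} (hu : u ∈ Set.Icc (t 0) (t (Fin.last m))) :
    ∃ i : Fin m, u ∈ Set.Icc (t i.castSucc) (t i.succ) := by
  by_contra! hne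
  have hle (k : Fin (m + 1)) : t k ≤ u := by
    induction k using Fin.induction with
    | zero => exact hu.1
    | succ i ih => exact le_of_not_ge fun hui => hne i ⟨ih, hui⟩
  obtain _ | k := m
  · exact ht rfl
  · exact hne (Fin.last k) ⟨hle _, hu.2⟩

namespace PiecewiseLinear

variable {σ : ℝ → EuclideanSpace ℝ (Fin 3)}

lemma exists_cover_eq_add_smul (h : PiecewiseLinear σ) :
    ∃ (m : ℕ) (s : Fin m → Set ℝ) (a b : Fin m → EuclideanSpace ℝ (Fin 3)),
      (∀ i, IsClosed (s i)) ∧ Set.Icc 0 1 ⊆ ⋃ i, s i ∧ ∀ i, ∀ u ∈ s i, σ u = a i + u • b i := by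
  obtain ⟨m, t, -, h0, h1, hσ⟩ := h
  let b (i : Fin m) := (t i.succ - t i.castSucc)⁻¹ • (σ (t i.succ) - σ (t i.castSucc))
  refine ⟨m, fun i => Set.Icc (t i.castSucc) (t i.succ),
    fun i => σ (t i.castSucc) - t i.castSucc • b i, b, fun i => isClosed_Icc, fun u hu => ?_,
    fun i u hu => ?_⟩
  · exact Set.mem_iUnion.2 (exists_mem_Icc_castSucc_succ (by simp [h0, h1]) (by rwa [h0, h1]))
  · rw [hσ i u hu, div_eq_mul_inv, mul_smul, sub_smul]
    simp only [b]
    abel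

lemma continuousOn (h : PiecewiseLinear σ) : ContinuousOn σ (Set.Icc 0 1) := by
  obtain ⟨m, s, a, b, hs, hcover, hσ⟩ := h.exists_cover_eq_add_smul
  refine ContinuousOn.mono ?_ hcover
  exact (locallyFinite_of_finite s).continuousOn_iUnion hs fun i =>
    ContinuousOn.congr (f := fun u => a i + u • b i) (by fun_prop) (hσ i)

lemma volume_image_Icc (h : PiecewiseLinear σ) : volume (σ '' Set.Icc 0 1) = 0 := by
  obtain ⟨m, s, a, b, -, hcover, hσ⟩ := h.exists_cover_eq_add_smul
  have hsub : σ '' Set.Icc 0 1 ⊆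
      ⋃ i, (affineSpan ℝ {a i, a i + b i} : Set (EuclideanSpace ℝ (Fin 3))) := by
    rintro _ ⟨u, hu, rfl⟩
    obtain ⟨i, hi⟩ := Set.mem_iUnion.1 (hcover hu)
    refine Set.mem_iUnion.2 ⟨i, ?_⟩
    simpa [hσ i u hi, AffineMap.lineMap_apply, add_comm] using
      AffineMap.lineMap_mem_affineSpan_pair u (a i) (a i + b i)
  exact measure_mono_null hsub
    (measure_iUnion_null fun i => addHaar_affineSpan_pair volume (by simp) _ _)

end PiecewiseLinear

end PiecewiseLinear

namespace IsNeedle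

variable {Ω : Set (EuclideanSpace ℝ (Fin 3))} {x : EuclideanSpace ℝ (Fin 3)}
  {σ : ℝ → EuclideanSpace ℝ (Fin 3)}

lemma apply_zero_notMem (hσ : IsNeedle Ω x σ) (hΩ : IsOpen Ω) : σ 0 ∉ Ω := by
  obtain ⟨-, -, -, h0, -, -⟩ := hσ
  rw [hΩ.frontier_eq] at h0
  exact h0.2

lemma mapsTo_Ioc (hσ : IsNeedle Ω x σ) (hx : x ∈ Ω) : Set.MapsTo σ (Set.Ioc 0 1) Ω := by
  obtain ⟨-, -, -, -, h1, hΩ⟩ := hσ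
  intro t ht
  rcases ht.2.eq_or_lt with rfl | ht1
  · rwa [h1]
  · exact hΩ t ⟨ht.1, ht1⟩

end IsNeedle

open InnerProductSpace in
lemma HarmonicOnSet.harmonicOnNhd {v : EuclideanSpace ℝ (Fin 3) → ℝ}
    {Ω : Set (EuclideanSpace ℝ (Fin 3))} (hv : HarmonicOnSet v Ω) (hΩ : IsOpen Ω) :
    HarmonicOnNhd v Ω := by
  intro z hz
  refine ⟨hv.1.contDiffAt (hΩ.mem_nhds hz), ?_⟩
  filter_upwards [hΩ.mem_nhds hz] with y hy
  rw [laplacian_eq_sum_fderiv_fderiv (EuclideanSpace.basisFun (Fin 3) ℝ)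
    (hv.1.contDiffAt (hΩ.mem_nhds hy))]
  simpa using hv.2 y hy

section Dipole

/-- The dipole potential `∂G/∂z_j` of the fundamental solution `G z = 1 / (4π‖z‖)`, written in
closed form. It takes the junk value `0` at the origin. -/
def dipolePotential (j : Fin 3) (z : EuclideanSpace ℝ (Fin 3)) : ℝ :=
  -(z j) / (4 * Real.pi * ‖z‖ ^ 3)

lemma continuousAt_dipolePotential (j : Fin 3) {z : EuclideanSpace ℝ (Fin 3)} (hz : z ≠ 0) :
    ContinuousAt (dipolePotential j) z := by
  unfold dipolePotential
  have : 4 * Real.pi * ‖z‖ ^ 3 ≠ 0 := by positivity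
  fun_prop (disch := assumption)

lemma continuousOn_dipolePotential_sub (j : Fin 3) (x : EuclideanSpace ℝ (Fin 3)) :
    ContinuousOn (fun z => dipolePotential j (z - x)) {x}ᶜ := fun _ hz =>
  (ContinuousAt.comp (f := fun z => z - x) (continuousAt_dipolePotential j (sub_ne_zero.2 hz))
    (by fun_prop)).continuousWithinAt

lemma dipolePotential_smul (j : Fin 3) {c : ℝ} (hc : 0 < c) (z : EuclideanSpace ℝ (Fin 3)) :
    dipolePotential j (c • z) = (c ^ 2)⁻¹ * dipolePotential j z := by
  simp only [dipolePotential, PiLp.smul_apply, smul_eq_mul, norm_smul, Real.norm_of_nonneg hc.le]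
  field_simp

lemma not_integrableAtFilter_dipolePotential_sq (j : Fin 3) (x : EuclideanSpace ℝ (Fin 3)) :
    ¬ IntegrableAtFilter (fun z => dipolePotential j (z - x) ^ 2) (𝓝 x) volume := by
  intro hint
  have he : (EuclideanSpace.single j 1 : EuclideanSpace ℝ (Fin 3)) ≠ 0 := by simp
  refine not_integrableAtFilter_nhds_zero_of_homogeneous (μ := volume) (k := 4)
    (f := fun z => dipolePotential j z ^ 2)
    (x₀ := EuclideanSpace.single j 1) (by simp) (fun c hc z => ?_)
    ((continuousAt_dipolePotential j he).pow 2) (by simp [dipolePotential, Real.pi_ne_zero])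
    (integrableAtFilter_nhds_zero_of_comp_sub_right hint)
  rw [dipolePotential_smul j hc, mul_pow]
  ring

end Dipole

/-- **The needle-recovery formula after Proposition 3.1.** With the hypotheses of
Proposition 3.1, the part `σ((0,1])` of the needle inside `Ω` coincides with the set of
points `z ∈ Ω` such that `∫_{B ∩ Ω} v_n² dz → +∞` for every open ball `B` centered at
`z`. -/
theorem needle_recovery (Ω : Set (EuclideanSpace ℝ (Fin 3))) (hΩo : IsOpen Ω)
    (hΩb : Bornology.IsBounded Ω)
    (x : EuclideanSpace ℝ (Fin 3)) (hx : x ∈ Ω)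
    (σ : ℝ → EuclideanSpace ℝ (Fin 3)) (hσ : IsNeedle Ω x σ)
    (j : Fin 3) (Φ : EuclideanSpace ℝ (Fin 3) → ℝ)
    (hΦ : ∀ z, Φ z = -((z - x) j) / (4 * Real.pi * ‖z - x‖ ^ 3))
    (v : ℕ → EuclideanSpace ℝ (Fin 3) → ℝ) (hharm : ∀ n, HarmonicOnSet (v n) Ω)
    (hconv : ∀ K : Set (EuclideanSpace ℝ (Fin 3)),
      K ⊆ Ω \ (σ '' Set.Icc 0 1) → IsCompact K →
      Tendsto (fun n => ∫ z in K, (v n z - Φ z) ^ 2) atTop (𝓝 0)) :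
    σ '' Set.Ioc 0 1 =
      {z | z ∈ Ω ∧ ∀ r > (0 : ℝ),
        Tendsto (fun n => ∫⁻ w in Metric.ball z r ∩ Ω, ENNReal.ofReal ((v n w) ^ 2))
          atTop (𝓝 ⊤)} := by
  obtain rfl : Φ = fun z => dipolePotential j (z - x) := funext hΦ
  obtain ⟨hlin, hinj, -, -, rfl, -⟩ := id hσ
  exact needle_recovery_general hΩo hlin.continuousOn hinj hlin.volume_image_Icc
    (hσ.apply_zero_notMem hΩo) (hσ.mapsTo_Ioc hx)
    ((continuousOn_dipolePotential_sub j _).mono fun z hz h => hz.2 ⟨1, by simp, h.symm⟩)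
    (not_integrableAtFilter_dipolePotential_sq j _) (fun n => (hharm n).harmonicOnNhd hΩo) hconv
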